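/- Let L be a residuated lattice. The map φ assigning to a ∈ L the family (a_P)_{P ∈ Spec(L)} ∈ ∏_{P ∈ Spec(L)} L/O(P) is an injective residuated lattice morphism: for all a, b ∈ L and all P ∈ Spec(L), (a ⊗ b)_P = a_P ⊗ b_P, (a ∧ b)_P = a_P ∧ b_P, (a ∨ b)_P = a_P ∨ b_P, (a → b)_P = a_P → b_P, 0_P and 1_P are the bottom and top of L/O(P); and if a_P = b_P for all P ∈ Spec(L) then a = b. -/

import Mathlib

/-- A residuated lattice: a bounded lattice with a commutative monoid
operation `mul` whose identity is the top element, and a residuum `himp`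
satisfying `mul x y ≤ z ↔ x ≤ himp y z`. Here `⊤` plays the role of `1`
and `⊥` the role of `0`. -/
class ResiduatedLattice (L : Type*) extends Lattice L, BoundedOrder L where
  mul : L → L → L
  himp : L → L → L
  mul_comm : ∀ x y : L, mul x y = mul y x
  mul_assoc : ∀ x y z : L, mul (mul x y) z = mul x (mul y z)
  mul_top : ∀ x : L, mul x ⊤ = x
  residuation : ∀ x y z : L, mul x y ≤ z ↔ x ≤ himp y z

namespace ResiduatedLattice

variable {L : Type*} [ResiduatedLattice L]

/-- A filter of a residuated lattice: a nonempty, upward closed subset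
closed under `mul`. -/
def IsFilter (F : Set L) : Prop :=
  F.Nonempty ∧ (∀ x y : L, x ∈ F → x ≤ y → y ∈ F) ∧
    ∀ x y : L, x ∈ F → y ∈ F → mul x y ∈ F

/-- A prime filter: a proper filter such that `x ⊔ y ∈ P` implies
`x ∈ P` or `y ∈ P`. -/
def IsPrimeFilter (P : Set L) : Prop :=
  IsFilter P ∧ P ≠ Set.univ ∧ ∀ x y : L, x ⊔ y ∈ P → x ∈ P ∨ y ∈ P

/-- `filterGen X` is the smallest filter containing `X`. -/
def filterGen (X : Set L) : Set L := ⋂₀ {F : Set L | IsFilter F ∧ X ⊆ F}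

/-- The prime spectrum: the set of all prime filters. -/
def Spectrum (L : Type*) [ResiduatedLattice L] := {P : Set L // IsPrimeFilter P}

/-- `D X = {P ∈ Spec L | X ⊄ P}`. -/
def D (X : Set L) : Set (Spectrum L) := {P : Spectrum L | ¬ X ⊆ P.1}

/-- `O P = {x | a ⊔ x = 1 for some a ∉ P}`. -/
def O (P : Set L) : Set L := {x : L | ∃ a ∉ P, a ⊔ x = ⊤}

/-- The congruence relation associated to a filter `F`:
`x ≡_F y` iff `(x → y) ⊗ (y → x) ∈ F`. -/
def rel (F : Set L) (x y : L) : Prop := mul (himp x y) (himp y x) ∈ F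

end ResiduatedLattice

namespace ResiduatedLattice

/-!
For a filter `F`, the relation `rel F x y` says that `x → y` and `y → x` lie in `F`, so the
inequality `(x → x') ⊗ (y → y') ≤ (x ∘ y → x' ∘ y')` for `∘` among `∧`, `∨`, `⊗`, and its variant
contravariant in `x` for `→`, make `rel F` a congruence. This applies to `F = O P`, a filter since
the complement of `P` is closed under `∨`.

Primality gives `O P ⊆ P`, and by Zorn's lemma the prime filters intersect in `{1}`. Hence if
`a_P = b_P` for all `P`, then `a → b` and `b → a` lie in every prime filter, so both equal `1`.
-/

section

local infixl:70 " ⊗ " => mul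
local infixr:60 " ⇒ " => himp

variable {L : Type*} [ResiduatedLattice L] {F P : Set L} {a x x' y y' : L}

instance : Std.Associative (mul (L := L)) := ⟨mul_assoc⟩

instance : Std.Commutative (mul (L := L)) := ⟨mul_comm⟩

theorem gc_mul_himp (y : L) : GaloisConnection (· ⊗ y) (y ⇒ ·) := fun x z => residuation x y z

theorem mul_le_mul (hx : x ≤ x') (hy : y ≤ y') : x ⊗ y ≤ x' ⊗ y' :=
  calc x ⊗ y ≤ x' ⊗ y := (gc_mul_himp y).monotone_l hx
    _ = y ⊗ x' := mul_comm _ _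
    _ ≤ y' ⊗ x' := (gc_mul_himp x').monotone_l hy
    _ = x' ⊗ y' := mul_comm _ _

theorem top_mul (x : L) : ⊤ ⊗ x = x := by rw [mul_comm, mul_top]

theorem mul_le_left (x y : L) : x ⊗ y ≤ x :=
  (mul_le_mul le_rfl le_top).trans_eq (mul_top x)

theorem mul_le_right (x y : L) : x ⊗ y ≤ y :=
  (mul_le_mul le_top le_rfl).trans_eq (top_mul y)

theorem sup_mul (x y z : L) : (x ⊔ y) ⊗ z = x ⊗ z ⊔ y ⊗ z := (gc_mul_himp z).l_sup

theorem mul_sup (x y z : L) : x ⊗ (y ⊔ z) = x ⊗ y ⊔ x ⊗ z := by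
  simp only [mul_comm x, sup_mul]

theorem sup_mul_sup_le (c x y : L) : (c ⊔ x) ⊗ (c ⊔ y) ≤ c ⊔ x ⊗ y := by
  rw [sup_mul, mul_sup x]
  exact sup_le (le_sup_of_le_left (mul_le_left _ _)) (sup_le_sup_right (mul_le_right _ _) _)

theorem himp_mul_le (x y : L) : (x ⇒ y) ⊗ x ≤ y := (gc_mul_himp x).l_u_le y

theorem himp_eq_top_iff : x ⇒ y = ⊤ ↔ x ≤ y := by
  rw [eq_top_iff, ← residuation, top_mul]

theorem himp_mul_himp_le_himp (x y z : L) : (x ⇒ y) ⊗ (y ⇒ z) ≤ x ⇒ z := by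
  rw [← residuation]
  calc (x ⇒ y) ⊗ (y ⇒ z) ⊗ x = (y ⇒ z) ⊗ ((x ⇒ y) ⊗ x) := by ac_rfl
    _ ≤ (y ⇒ z) ⊗ y := mul_le_mul le_rfl (himp_mul_le x y)
    _ ≤ z := himp_mul_le y z

theorem himp_mul_himp_le_inf_himp_inf (x x' y y' : L) :
    (x ⇒ x') ⊗ (y ⇒ y') ≤ x ⊓ y ⇒ x' ⊓ y' := by
  rw [← residuation]
  exact le_inf
    ((mul_le_mul (mul_le_left _ _) inf_le_left).trans (himp_mul_le x x'))
    ((mul_le_mul (mul_le_right _ _) inf_le_right).trans (himp_mul_le y y'))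

theorem himp_mul_himp_le_sup_himp_sup (x x' y y' : L) :
    (x ⇒ x') ⊗ (y ⇒ y') ≤ x ⊔ y ⇒ x' ⊔ y' := by
  rw [← residuation, mul_sup]
  exact sup_le_sup
    ((mul_le_mul (mul_le_left _ _) le_rfl).trans (himp_mul_le x x'))
    ((mul_le_mul (mul_le_right _ _) le_rfl).trans (himp_mul_le y y'))

theorem himp_mul_himp_le_mul_himp_mul (x x' y y' : L) :
    (x ⇒ x') ⊗ (y ⇒ y') ≤ x ⊗ y ⇒ x' ⊗ y' := by
  rw [← residuation]
  calc (x ⇒ x') ⊗ (y ⇒ y') ⊗ (x ⊗ y) = ((x ⇒ x') ⊗ x) ⊗ ((y ⇒ y') ⊗ y) := by ac_rfl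
    _ ≤ x' ⊗ y' := mul_le_mul (himp_mul_le x x') (himp_mul_le y y')

theorem himp_mul_himp_le_himp_himp_himp (x x' y y' : L) :
    (x' ⇒ x) ⊗ (y ⇒ y') ≤ (x ⇒ y) ⇒ (x' ⇒ y') := by
  rw [← residuation]
  calc (x' ⇒ x) ⊗ (y ⇒ y') ⊗ (x ⇒ y)
      = (x' ⇒ x) ⊗ ((x ⇒ y) ⊗ (y ⇒ y')) := by ac_rfl
    _ ≤ (x' ⇒ x) ⊗ (x ⇒ y') := mul_le_mul le_rfl (himp_mul_himp_le_himp x y y')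
    _ ≤ x' ⇒ y' := himp_mul_himp_le_himp x' x y'

namespace IsFilter

theorem mem_of_le (hF : IsFilter F) (hx : x ∈ F) (hxy : x ≤ y) : y ∈ F := hF.2.1 x y hx hxy

theorem mul_mem (hF : IsFilter F) (hx : x ∈ F) (hy : y ∈ F) : x ⊗ y ∈ F := hF.2.2 x y hx hy

theorem top_mem (hF : IsFilter F) : ⊤ ∈ F :=
  let ⟨_, hx⟩ := hF.1
  hF.mem_of_le hx le_top

theorem setOf_sup_mem (hF : IsFilter F) (c : L) : IsFilter {z | c ⊔ z ∈ F} := by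
  refine ⟨⟨⊤, ?_⟩, fun x y hx hxy => ?_, fun x y hx hy => ?_⟩
  · exact hF.mem_of_le hF.top_mem le_sup_right
  · exact hF.mem_of_le hx (sup_le_sup_left hxy c)
  · exact hF.mem_of_le (hF.mul_mem hx hy) (sup_mul_sup_le c x y)

theorem rel_iff (hF : IsFilter F) : rel F x y ↔ x ⇒ y ∈ F ∧ y ⇒ x ∈ F :=
  ⟨fun h => ⟨hF.mem_of_le h (mul_le_left _ _), hF.mem_of_le h (mul_le_right _ _)⟩,
    fun h => hF.mul_mem h.1 h.2⟩

theorem himp_mem_trans (hF : IsFilter F) {z : L} (hxy : x ⇒ y ∈ F) (hyz : y ⇒ z ∈ F) :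
    x ⇒ z ∈ F :=
  hF.mem_of_le (hF.mul_mem hxy hyz) (himp_mul_himp_le_himp x y z)

theorem equivalence_rel (hF : IsFilter F) : Equivalence (rel F) where
  refl x := by
    have hxx : x ⇒ x ∈ F := himp_eq_top_iff.2 (le_refl x) ▸ hF.top_mem
    exact hF.rel_iff.2 ⟨hxx, hxx⟩
  symm h := hF.rel_iff.2 (hF.rel_iff.1 h).symm
  trans hxy hyz := by
    rw [hF.rel_iff] at hxy hyz ⊢
    exact ⟨hF.himp_mem_trans hxy.1 hyz.1, hF.himp_mem_trans hyz.2 hxy.2⟩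

theorem rel_inf (hF : IsFilter F) (hx : rel F x x') (hy : rel F y y') :
    rel F (x ⊓ y) (x' ⊓ y') := by
  rw [hF.rel_iff] at hx hy ⊢
  exact ⟨hF.mem_of_le (hF.mul_mem hx.1 hy.1) (himp_mul_himp_le_inf_himp_inf _ _ _ _),
    hF.mem_of_le (hF.mul_mem hx.2 hy.2) (himp_mul_himp_le_inf_himp_inf _ _ _ _)⟩

theorem rel_sup (hF : IsFilter F) (hx : rel F x x') (hy : rel F y y') :
    rel F (x ⊔ y) (x' ⊔ y') := by
  rw [hF.rel_iff] at hx hy ⊢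
  exact ⟨hF.mem_of_le (hF.mul_mem hx.1 hy.1) (himp_mul_himp_le_sup_himp_sup _ _ _ _),
    hF.mem_of_le (hF.mul_mem hx.2 hy.2) (himp_mul_himp_le_sup_himp_sup _ _ _ _)⟩

theorem rel_mul (hF : IsFilter F) (hx : rel F x x') (hy : rel F y y') :
    rel F (x ⊗ y) (x' ⊗ y') := by
  rw [hF.rel_iff] at hx hy ⊢
  exact ⟨hF.mem_of_le (hF.mul_mem hx.1 hy.1) (himp_mul_himp_le_mul_himp_mul _ _ _ _),
    hF.mem_of_le (hF.mul_mem hx.2 hy.2) (himp_mul_himp_le_mul_himp_mul _ _ _ _)⟩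

theorem rel_himp (hF : IsFilter F) (hx : rel F x x') (hy : rel F y y') :
    rel F (x ⇒ y) (x' ⇒ y') := by
  rw [hF.rel_iff] at hx hy ⊢
  exact ⟨hF.mem_of_le (hF.mul_mem hx.2 hy.1) (himp_mul_himp_le_himp_himp_himp _ _ _ _),
    hF.mem_of_le (hF.mul_mem hx.1 hy.2) (himp_mul_himp_le_himp_himp_himp _ _ _ _)⟩

/-- The binary operation induced on the quotient of `L` by a filter `F` by an operation of `L`
compatible with `rel F`. -/
def quotMap₂ (hF : IsFilter F) (op : L → L → L)
    (hop : ∀ {x x' y y' : L}, rel F x x' → rel F y y' → rel F (op x y) (op x' y')) :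
    Quot (rel F) → Quot (rel F) → Quot (rel F) :=
  Quot.map₂ op (fun x _ _ hy => hop (hF.equivalence_rel.refl x) hy)
    (fun _ _ y hx => hop hx (hF.equivalence_rel.refl y))

end IsFilter

theorem isFilter_singleton_top : IsFilter ({⊤} : Set L) :=
  ⟨Set.singleton_nonempty ⊤, fun _ _ hx hxy => top_le_iff.1 (hx.ge.trans hxy),
    fun _ _ hx hy => by rw [hx, hy, mul_top]; rfl⟩

theorem isFilter_sUnion {c : Set (Set L)} (hne : c.Nonempty) (hdir : DirectedOn (· ⊆ ·) c)
    (hc : ∀ G ∈ c, IsFilter G) : IsFilter (⋃₀ c) := by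
  refine ⟨?_, ?_, ?_⟩
  · obtain ⟨G, hG⟩ := hne
    exact ⟨⊤, G, hG, (hc G hG).top_mem⟩
  · rintro x y ⟨G, hG, hx⟩ hxy
    exact ⟨G, hG, (hc G hG).mem_of_le hx hxy⟩
  · rintro x y ⟨G, hG, hx⟩ ⟨H, hH, hy⟩
    obtain ⟨K, hK, hGK, hHK⟩ := hdir G hG H hH
    exact ⟨K, hK, (hc K hK).mul_mem (hGK hx) (hHK hy)⟩

theorem isPrimeFilter_of_maximal (hP : Maximal (fun G => IsFilter G ∧ a ∉ G) P) :
    IsPrimeFilter P := by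
  obtain ⟨hF, ha⟩ := hP.prop
  -- If `y ∉ P` but `c ⊔ y ∈ P`, then `{z | c ⊔ z ∈ P}` properly extends `P`, so it contains `a`.
  have sup_mem_of_sup_mem {c y : L} (hy : y ∉ P) (hcy : c ⊔ y ∈ P) : c ⊔ a ∈ P := by
    by_contra hca
    have hle : P ⊆ {z | c ⊔ z ∈ P} := fun z hz => hF.mem_of_le hz le_sup_right
    exact hy (hP.le_of_ge ⟨hF.setOf_sup_mem c, hca⟩ hle hcy)
  refine ⟨hF, (Set.ne_univ_iff_exists_notMem P).2 ⟨a, ha⟩, fun x y hxy => ?_⟩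
  by_contra! h
  have hax : a ⊔ x ∈ P := sup_comm x a ▸ sup_mem_of_sup_mem h.2 hxy
  have haa : a ⊔ a ∈ P := sup_mem_of_sup_mem h.1 hax
  exact ha (sup_idem a ▸ haa)

theorem exists_isPrimeFilter_notMem (hF : IsFilter F) (ha : a ∉ F) :
    ∃ P, IsPrimeFilter P ∧ F ⊆ P ∧ a ∉ P := by
  obtain ⟨P, hFP, hP⟩ := zorn_subset_nonempty {G : Set L | IsFilter G ∧ a ∉ G}
    (fun c hc hchain hne => ⟨⋃₀ c,
      ⟨isFilter_sUnion hne hchain.directedOn fun G hG => (hc hG).1,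
        fun ⟨_, hG, haG⟩ => (hc hG).2 haG⟩,
      fun _ => Set.subset_sUnion_of_mem⟩)
    F ⟨hF, ha⟩
  exact ⟨P, isPrimeFilter_of_maximal hP, hFP, hP.prop.2⟩

theorem eq_top_of_forall_mem_isPrimeFilter (h : ∀ P, IsPrimeFilter P → x ∈ P) : x = ⊤ := by
  by_contra hx
  obtain ⟨P, hP, -, hxP⟩ := exists_isPrimeFilter_notMem isFilter_singleton_top hx
  exact hxP (h P hP)

namespace IsPrimeFilter

theorem isFilter_O (hP : IsPrimeFilter P) : IsFilter (O P) := by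
  obtain ⟨-, hne, hprime⟩ := hP
  refine ⟨?_, ?_, ?_⟩
  · obtain ⟨a, ha⟩ := (Set.ne_univ_iff_exists_notMem P).1 hne
    exact ⟨⊤, a, ha, sup_top_eq a⟩
  · rintro x y ⟨a, ha, hax⟩ hxy
    exact ⟨a, ha, top_le_iff.1 (hax.ge.trans (sup_le_sup_left hxy a))⟩
  · rintro x y ⟨a, ha, hax⟩ ⟨b, hb, hby⟩
    have hx : (a ⊔ b) ⊔ x = ⊤ := top_le_iff.1 (hax.ge.trans (sup_le_sup_right le_sup_left x))
    have hy : (a ⊔ b) ⊔ y = ⊤ := top_le_iff.1 (hby.ge.trans (sup_le_sup_right le_sup_right y))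
    exact ⟨a ⊔ b, fun hab => (hprime a b hab).elim ha hb,
      (isFilter_singleton_top.setOf_sup_mem (a ⊔ b)).mul_mem hx hy⟩

theorem O_subset (hP : IsPrimeFilter P) : O P ⊆ P := by
  rintro x ⟨a, ha, hax⟩
  have hmem : a ⊔ x ∈ P := hax ▸ hP.1.top_mem
  exact (hP.2.2 a x hmem).resolve_left ha

end IsPrimeFilter

theorem le_of_forall_rel_O (h : ∀ P : Spectrum L, rel (O P.1) x y) : x ≤ y :=
  himp_eq_top_iff.1 <| eq_top_of_forall_mem_isPrimeFilter fun P hP =>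
    hP.O_subset (hP.isFilter_O.rel_iff.1 (h ⟨P, hP⟩)).1

theorem eq_of_forall_rel_O (h : ∀ P : Spectrum L, rel (O P.1) x y) : x = y :=
  le_antisymm (le_of_forall_rel_O h) <|
    le_of_forall_rel_O fun P => P.2.isFilter_O.equivalence_rel.symm (h P)

end

/-- the map `a ↦ (a_P)_{P ∈ Spec L}` into the product of the
quotients `L/O(P)` is an injective residuated lattice morphism: the
operations of `L` descend to each quotient `L/O(P)` making the class map a
morphism, the classes of `0` and `1` are bottom and top of each stalk (with
respect to the induced meet), and `a_P = b_P` for all `P` forces `a = b`. -/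
theorem product_representation (L : Type*) [ResiduatedLattice L] :
    ∃ qinf qsup qmul qhimp : (P : Spectrum L) →
        Quot (rel (O P.1)) → Quot (rel (O P.1)) → Quot (rel (O P.1)),
      (∀ (P : Spectrum L) (a b : L),
        qinf P (Quot.mk _ a) (Quot.mk _ b) = Quot.mk _ (a ⊓ b) ∧
        qsup P (Quot.mk _ a) (Quot.mk _ b) = Quot.mk _ (a ⊔ b) ∧
        qmul P (Quot.mk _ a) (Quot.mk _ b) = Quot.mk _ (mul a b) ∧
        qhimp P (Quot.mk _ a) (Quot.mk _ b) = Quot.mk _ (himp a b)) ∧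
      (∀ (P : Spectrum L) (q : Quot (rel (O P.1))),
        qinf P (Quot.mk _ (⊥ : L)) q = Quot.mk _ (⊥ : L) ∧
        qinf P q (Quot.mk _ (⊤ : L)) = q) ∧
      ∀ a b : L,
        (∀ P : Spectrum L, Quot.mk (rel (O P.1)) a = Quot.mk (rel (O P.1)) b) →
        a = b := by
  have hO (P : Spectrum L) : IsFilter (O P.1) := P.2.isFilter_O
  refine ⟨fun P => (hO P).quotMap₂ (· ⊓ ·) (hO P).rel_inf,
    fun P => (hO P).quotMap₂ (· ⊔ ·) (hO P).rel_sup,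
    fun P => (hO P).quotMap₂ mul (hO P).rel_mul,
    fun P => (hO P).quotMap₂ himp (hO P).rel_himp,
    fun _ _ _ => ⟨rfl, rfl, rfl, rfl⟩, fun P q => ?_, fun a b hab => ?_⟩
  · induction q using Quot.ind with
    | mk a => exact ⟨congrArg (Quot.mk _) (bot_inf_eq a), congrArg (Quot.mk _) (inf_top_eq a)⟩
  · exact eq_of_forall_rel_O fun P => ((hO P).equivalence_rel.quot_mk_eq_iff a b).1 (hab P)

end ResiduatedLattice
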